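/- (Discretized John–Nirenberg lemma.) Let σ be a Borel measure on ℝ^d that is finite and positive on dyadic cubes, and let α : 𝔻 → [0,∞). Suppose there exist η > 0 and c₀ > 0 such that for every Q ∈ 𝔻 there exists a pairwise disjoint family ℱ_Q = {Q_j} ⊂ 𝔻(Q) with σ(Q ∖ ⋃_{Q_j∈ℱ_Q} Q_j) ≥ η σ(Q) and ∑_{Q' ∈ S_Q} α_{Q'} ≤ c₀ σ(Q), where S_Q := {Q' ∈ 𝔻(Q) : Q' is not contained in any Q_j ∈ ℱ_Q}. Then for every Q ∈ 𝔻, ∑_{Q' ∈ 𝔻(Q)} α_{Q'} ≤ (c₀/η) σ(Q). -/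

import Mathlib

/-!
A threshold argument, for weights `a` and sizes `m` on a family of cubes. Suppose every `q` has a
stopping family `F` with `∑_{J ∈ F} m J + η m q ≤ m q`. Then every `J ∈ F` satisfies
`m J ≤ (1 - η) m q`, so an element of size larger than `(1 - η)^(n+1) m q` that lies below `J` has
size larger than `(1 - η)^n m J`. Hence, by induction on `n`, the elements below `q` of size larger
than `(1 - η)^n m q` have total weight at most `(c₀ / η) m q`: the stopping tree contributes at most
`c₀ m q`, the members of `F` contribute at most `(c₀ / η) ∑_{J ∈ F} m J`, and these two bounds add
up to at most `(c₀ / η) m q`. As every element has positive size, letting `n → ∞` recovers all of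
them.
-/

noncomputable section
open MeasureTheory Set Matrix
open scoped ENNReal NNReal

namespace Parabolic

/-- The standard dyadic cube `2^{−k}(z + [0,1)^d)` of `ℝ^d`. -/
def dCube (d : ℕ) (k : ℤ) (z : Fin d → ℤ) : Set (Fin d → ℝ) :=
  {x | ∀ i, (z i : ℝ) * 2 ^ (-k) ≤ x i ∧ x i < ((z i : ℝ) + 1) * 2 ^ (-k)}

/-- `Q` is a cube of the standard dyadic grid `𝔻` of `ℝ^d`. -/
def IsDyadic {d : ℕ} (Q : Set (Fin d → ℝ)) : Prop := ∃ k z, Q = dCube d k z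

/-- `Q'` is a dyadic child of `Q`. -/
def IsDyadicChild {d : ℕ} (Q' Q : Set (Fin d → ℝ)) : Prop :=
  ∃ (k : ℤ) (z z' : Fin d → ℤ), Q = dCube d k z ∧ Q' = dCube d (k + 1) z' ∧ Q' ⊆ Q

open Filter Topology

theorem le_one_sub_mul_of_add_mul_le {x y η : ℝ≥0∞} (hy : y ≠ ⊤) (h : x + η * y ≤ y) :
    x ≤ (1 - η) * y := by
  rw [ENNReal.sub_mul fun _ _ ↦ hy, one_mul]
  exact ENNReal.le_sub_of_add_le_right (ne_top_of_le_ne_top hy (le_add_self.trans h)) h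

theorem tsum_le_of_forall_tsum_lt_le {ι κ : Type*} {l : Filter κ} [l.NeBot] {s : Set ι}
    {m a : ι → ℝ≥0∞} {t : κ → ℝ≥0∞} {B : ℝ≥0∞} (ht : Tendsto t l (𝓝 0))
    (hm : ∀ x ∈ s, m x ≠ 0) (h : ∀ k, ∑' x : {x ∈ s | t k < m x}, a x ≤ B) :
    ∑' x : s, a x ≤ B := by
  rw [tsum_subtype, ENNReal.tsum_eq_iSup_sum]
  refine iSup_le fun u ↦ ?_
  have h_small : ∀ᶠ k in l, ∀ x ∈ u, x ∈ s → t k < m x :=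
    (eventually_all_finset u).2 fun x _ ↦ eventually_imp_distrib_left.2 fun hx ↦
      ht.eventually_lt_const (pos_iff_ne_zero.2 (hm x hx))
  obtain ⟨k, hk⟩ := h_small.exists
  calc ∑ x ∈ u, s.indicator a x
      = ∑ x ∈ u, {x ∈ s | t k < m x}.indicator a x :=
        Finset.sum_congr rfl fun x hx ↦ by
          by_cases hxs : x ∈ s <;> simp [hxs, hk x hx]
    _ ≤ ∑' x, {x ∈ s | t k < m x}.indicator a x := ENNReal.sum_le_tsum u
    _ = ∑' x : {x ∈ s | t k < m x}, a x := (tsum_subtype _ a).symm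
    _ ≤ B := h k

section StoppingTree

variable {α : Type*} [Preorder α]

/-- The stopping tree of `q` in the grid `𝒟` for the stopping family `F`: the elements of `𝒟` below
`q` that lie below no member of `F`. For a grid of sets this is the region `S_Q` of the
John–Nirenberg lemma, with `≤` read as inclusion. -/
def stoppingTree (𝒟 F : Set α) (q : α) : Set α :=
  {x | x ∈ 𝒟 ∧ x ≤ q ∧ ∀ J ∈ F, ¬ x ≤ J}

theorem tsum_inter_Iic_le_stoppingTree_add (a : α → ℝ≥0∞) (𝒟 F : Set α) (q : α) :
    ∑' x : ↥(𝒟 ∩ Iic q), a x ≤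
      ∑' x : stoppingTree 𝒟 F q, a x + ∑' J : F, ∑' x : ↥(𝒟 ∩ Iic (J : α)), a x := by
  have h_cover : 𝒟 ∩ Iic q ⊆ stoppingTree 𝒟 F q ∪ ⋃ J : F, 𝒟 ∩ Iic (J : α) := by
    rintro x ⟨hx, hxq⟩
    by_cases h : ∀ J ∈ F, ¬ x ≤ J
    · exact Or.inl ⟨hx, hxq, h⟩
    · push Not at h
      obtain ⟨J, hJ, hxJ⟩ := h
      exact Or.inr (mem_iUnion.2 ⟨⟨J, hJ⟩, hx, hxJ⟩)
  refine (ENNReal.tsum_mono_subtype a h_cover).trans ((ENNReal.tsum_union_le a _ _).trans ?_)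
  gcongr
  exact ENNReal.tsum_iUnion_le_tsum a _

variable {𝒟 : Set α} {m a : α → ℝ≥0∞} {η : ℝ≥0} {c₀ : ℝ≥0∞}

theorem tsum_lt_inter_Iic_le_div_mul (hm_mono : MonotoneOn m 𝒟) (hm : ∀ q ∈ 𝒟, m q ≠ ⊤)
    (hη : η ≠ 0)
    (h : ∀ q ∈ 𝒟, ∃ F ⊆ 𝒟, ∑' J : F, m J + η * m q ≤ m q ∧
      ∑' x : stoppingTree 𝒟 F q, a x ≤ c₀ * m q)
    (n : ℕ) {q : α} (hq : q ∈ 𝒟) :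
    ∑' x : ↥({x ∈ 𝒟 | (1 - η) ^ n * m q < m x} ∩ Iic q), a x ≤ c₀ / η * m q := by
  induction n generalizing q with
  | zero =>
    have h_empty : {x ∈ 𝒟 | (1 - (η : ℝ≥0∞)) ^ 0 * m q < m x} ∩ Iic q = ∅ :=
      eq_empty_of_forall_notMem fun x ⟨⟨hx, hlt⟩, hxq⟩ ↦
        (hm_mono hx hq hxq).not_gt (by simpa using hlt)
    rw [h_empty, tsum_empty]
    exact zero_le
  | succ n ih =>
    obtain ⟨F, hF, h_packing, h_tree⟩ := h q hq
    have h_shrink (J : F) : m J ≤ (1 - η) * m q :=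
      le_one_sub_mul_of_add_mul_le (hm q hq)
        ((add_le_add_left (ENNReal.le_tsum J) _).trans h_packing)
    have h_threshold (J : F) :
        {x ∈ 𝒟 | (1 - (η : ℝ≥0∞)) ^ (n + 1) * m q < m x} ∩ Iic (J : α) ⊆
          {x ∈ 𝒟 | (1 - (η : ℝ≥0∞)) ^ n * m J < m x} ∩ Iic (J : α) := by
      refine inter_subset_inter_left _ fun x ⟨hx, hlt⟩ ↦ ⟨hx, lt_of_le_of_lt ?_ hlt⟩
      rw [pow_succ, mul_assoc]
      gcongr
      exact h_shrink J
    have h_subtree : stoppingTree {x ∈ 𝒟 | (1 - η) ^ (n + 1) * m q < m x} F q ⊆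
        stoppingTree 𝒟 F q := fun _ hx ↦ ⟨hx.1.1, hx.2⟩
    calc ∑' x : ↥({x ∈ 𝒟 | (1 - η) ^ (n + 1) * m q < m x} ∩ Iic q), a x
        ≤ ∑' x : stoppingTree {x ∈ 𝒟 | (1 - η) ^ (n + 1) * m q < m x} F q, a x +
            ∑' J : F, ∑' x : ↥({x ∈ 𝒟 | (1 - η) ^ (n + 1) * m q < m x} ∩ Iic (J : α)), a x :=
          tsum_inter_Iic_le_stoppingTree_add a _ F q
      _ ≤ c₀ * m q + ∑' J : F, c₀ / η * m J := by
          gcongr with J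
          · exact (ENNReal.tsum_mono_subtype a h_subtree).trans h_tree
          · exact (ENNReal.tsum_mono_subtype a (h_threshold J)).trans (ih (hF J.2))
      _ = c₀ / η * (∑' J : F, m J + η * m q) := by
          rw [ENNReal.tsum_mul_left, mul_add, ← mul_assoc (c₀ / η),
            ENNReal.div_mul_cancel (by simpa using hη) ENNReal.coe_ne_top, add_comm]
      _ ≤ c₀ / η * m q := by gcongr

theorem tsum_inter_Iic_le_div_mul (hm_mono : MonotoneOn m 𝒟) (hm : ∀ q ∈ 𝒟, m q ≠ 0 ∧ m q ≠ ⊤)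
    (hη : η ≠ 0)
    (h : ∀ q ∈ 𝒟, ∃ F ⊆ 𝒟, ∑' J : F, m J + η * m q ≤ m q ∧
      ∑' x : stoppingTree 𝒟 F q, a x ≤ c₀ * m q)
    {q : α} (hq : q ∈ 𝒟) :
    ∑' x : ↥(𝒟 ∩ Iic q), a x ≤ c₀ / η * m q := by
  have h_tendsto : Tendsto (fun n ↦ (1 - (η : ℝ≥0∞)) ^ n * m q) atTop (𝓝 0) := by
    have h_lt : 1 - (η : ℝ≥0∞) < 1 := ENNReal.sub_lt_self (by simp) (by simp) (by simpa using hη)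
    simpa using ENNReal.Tendsto.mul_const
      (ENNReal.tendsto_pow_atTop_nhds_zero_of_lt_one h_lt) (Or.inr (hm q hq).2)
  refine tsum_le_of_forall_tsum_lt_le h_tendsto (fun x hx ↦ (hm x hx.1).1) fun n ↦ ?_
  have h_sep : {x ∈ 𝒟 ∩ Iic q | (1 - η) ^ n * m q < m x} ⊆
      {x ∈ 𝒟 | (1 - η) ^ n * m q < m x} ∩ Iic q := fun _ hx ↦ ⟨⟨hx.1.1, hx.2⟩, hx.1.2⟩
  exact (ENNReal.tsum_mono_subtype a h_sep).trans
    (tsum_lt_inter_Iic_le_div_mul hm_mono (fun x hx ↦ (hm x hx).2) hη h n hq)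

end StoppingTree

section Measure

variable {X : Type*} [MeasurableSpace X] (μ : Measure X)

theorem tsum_measure_add_measure_sdiff_iUnion_le {ι : Type*} {A : ι → Set X} {Q : Set X}
    (hA : ∀ i, MeasurableSet (A i)) (h_disj : Pairwise (Function.onFun Disjoint A))
    (h_sub : ∀ i, A i ⊆ Q) :
    ∑' i, μ (A i) + μ (Q \ ⋃ i, A i) ≤ μ Q := by
  rw [ENNReal.tsum_eq_iSup_sum, ENNReal.iSup_add]
  refine iSup_le fun s ↦ ?_
  calc ∑ i ∈ s, μ (A i) + μ (Q \ ⋃ i, A i)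
      ≤ μ (⋃ i ∈ s, A i) + μ (Q \ ⋃ i ∈ s, A i) := by
        rw [measure_biUnion_finset (fun i _ j _ hij ↦ h_disj hij) fun i _ ↦ hA i]
        gcongr
        exact iUnion_subset fun _ ↦ subset_rfl
    _ = μ Q := by
        rw [measure_add_sdiff (s.measurableSet_biUnion fun i _ ↦ hA i).nullMeasurableSet,
          union_eq_self_of_subset_left (iUnion₂_subset fun i _ ↦ h_sub i)]

theorem discretized_john_nirenberg_general {𝒟 : Set (Set X)}
    (h_meas : ∀ Q ∈ 𝒟, MeasurableSet Q) (hμ : ∀ Q ∈ 𝒟, 0 < μ Q ∧ μ Q < ⊤)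
    {a : Set X → ℝ≥0∞} {η : ℝ≥0} {c₀ : ℝ≥0∞} (hη : η ≠ 0)
    (h : ∀ Q ∈ 𝒟, ∃ F : Set (Set X), (∀ J ∈ F, J ∈ 𝒟 ∧ J ⊆ Q) ∧ F.Pairwise Disjoint ∧
      η * μ Q ≤ μ (Q \ ⋃₀ F) ∧ ∑' Q' : stoppingTree 𝒟 F Q, a Q' ≤ c₀ * μ Q)
    {Q : Set X} (hQ : Q ∈ 𝒟) :
    ∑' Q' : ↥(𝒟 ∩ Iic Q), a Q' ≤ c₀ / η * μ Q := by
  refine tsum_inter_Iic_le_div_mul (fun _ _ _ _ hle ↦ measure_mono hle)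
    (fun R hR ↦ ⟨(hμ R hR).1.ne', (hμ R hR).2.ne⟩) hη (fun R hR ↦ ?_) hQ
  obtain ⟨F, hF, h_disj, h_large, h_tree⟩ := h R hR
  refine ⟨F, fun J hJ ↦ (hF J hJ).1, ?_, h_tree⟩
  calc ∑' J : F, μ J + η * μ R
      ≤ ∑' J : F, μ J + μ (R \ ⋃ J : F, (J : Set X)) := by
        rw [← sUnion_eq_iUnion]
        gcongr
    _ ≤ μ R := tsum_measure_add_measure_sdiff_iUnion_le μ (fun J ↦ h_meas J (hF J J.2).1)
        ((pairwise_subtype_iff_pairwise_set F Disjoint).2 h_disj) fun J ↦ (hF J J.2).2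

end Measure

theorem IsDyadic.measurableSet {d : ℕ} {Q : Set (Fin d → ℝ)} (hQ : IsDyadic Q) :
    MeasurableSet Q := by
  obtain ⟨k, z, rfl⟩ := hQ
  have h_pi : dCube d k z = univ.pi
      fun i ↦ Ico ((z i : ℝ) * 2 ^ (-k)) (((z i : ℝ) + 1) * 2 ^ (-k)) := by
    ext x
    simp [dCube]
  rw [h_pi]
  exact .univ_pi fun _ ↦ measurableSet_Ico

/-- Discretized John–Nirenberg lemma: let `σ` be a Borel measure on `ℝ^d`, finite and
positive on dyadic cubes, and `a : 𝔻 → [0,∞]`. If there are `η, c₀ > 0` such that every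
dyadic cube `Q` admits a pairwise disjoint family `ℱ_Q` of dyadic subcubes with
`σ(Q ∖ ⋃ ℱ_Q) ≥ η σ(Q)` and `∑_{Q' ∈ S_Q} a(Q') ≤ c₀ σ(Q)` — where `S_Q` consists of the
dyadic subcubes of `Q` contained in no member of `ℱ_Q` — then
`∑_{Q' ∈ 𝔻(Q)} a(Q') ≤ (c₀/η) σ(Q)` for every dyadic cube `Q`. -/
theorem discretized_john_nirenberg (d : ℕ) (σ : Measure (Fin d → ℝ))
    (hσ : ∀ Q : Set (Fin d → ℝ), IsDyadic Q → 0 < σ Q ∧ σ Q < ⊤)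
    (a : Set (Fin d → ℝ) → ℝ≥0∞) (η c₀ : ℝ) (hη : 0 < η) (hc₀ : 0 < c₀)
    (h : ∀ Q : Set (Fin d → ℝ), IsDyadic Q →
      ∃ Fam : Set (Set (Fin d → ℝ)),
        (∀ J ∈ Fam, IsDyadic J ∧ J ⊆ Q) ∧ Fam.Pairwise Disjoint ∧
        ENNReal.ofReal η * σ Q ≤ σ (Q \ ⋃₀ Fam) ∧
        (∑' Q' : {Q' : Set (Fin d → ℝ) // IsDyadic Q' ∧ Q' ⊆ Q ∧ ∀ J ∈ Fam, ¬ Q' ⊆ J},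
            a Q') ≤ ENNReal.ofReal c₀ * σ Q) :
    ∀ Q : Set (Fin d → ℝ), IsDyadic Q →
      (∑' Q' : {Q' : Set (Fin d → ℝ) // IsDyadic Q' ∧ Q' ⊆ Q}, a Q')
        ≤ ENNReal.ofReal (c₀ / η) * σ Q := by
  intro Q hQ
  rw [ENNReal.ofReal_div_of_pos hη]
  exact discretized_john_nirenberg_general σ (𝒟 := {R | IsDyadic R})
    (fun _ ↦ IsDyadic.measurableSet) hσ (Real.toNNReal_pos.2 hη).ne' h hQ

end Parabolic
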